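/- arXiv:1709.09924 — 2 statements merged into one kernel-verified Lean document; each statement's English description precedes it below -/
import Mathlib

section
/- Let L > 0. There exist λ ∈ ℂ and three times continuously differentiable functions θ, u : [0,L] → ℂ, not both identically zero, satisfying −u′(x) − u‴(x) = λ·θ(x) and −θ′(x) − θ‴(x) = λ·u(x) for all x ∈ [0,L], with boundary conditions θ(0) = θ(L) = θ′(0) = θ″(L) = 0 and u(0) = u(L) = u′(L) = 0, if and only if there exist p ∈ ℂ and (α, α′, β, γ, γ′) ∈ ℂ⁵ with (α, α′, β, γ, γ′) ≠ (0,0,0,0,0) and entire functions F, G : ℂ → ℂ such that F(ξ)·(ξ³ − ξ + p) = α + iβξ + γ·e^{−iLξ} + iγ′ξ·e^{−iLξ} and G(ξ)·(ξ³ − ξ + p) = α′ − iβξ + γ·e^{iLξ} + iγ′ξ·e^{iLξ} for all ξ ∈ ℂ. -/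
open Set

/-!
The combinations `v = u + θ` and `w = u - θ` decouple the system into `-v' - v''' = λ v` and
`-w' - w''' = -λ w`. Integrating by parts, the Laplace transform of `v` truncated to `[0, L]`, which
is entire, times the symbol `z ^ 3 + z + λ` is a boundary term carrying the derivatives of `v` up to
order two at both endpoints. Conversely, let an entire `Φ` times the symbol be the boundary term of
two prescribed endpoint jets, and solve the Cauchy problem with the jet prescribed at `L`. Up to an
exponential factor, `Φ` minus the truncated transform of that solution is an entire function whose
product with the cubic symbol is a polynomial of degree at most two; by Liouville's theorem it
vanishes, so the jet at `0` is also the prescribed one. Putting `ξ = -iz` for `v`, `ξ = iz` for `w`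
and `p = iλ` identifies these quotients with those of the theorem, and by uniqueness for the Cauchy
problem all coefficients vanish exactly when `v` and `w` do.
-/

open Filter Topology Polynomial
open scoped ContDiff

theorem eq_zero_of_mul_eval_eq_of_degree_lt {P Q : ℂ[X]} (hPQ : P.degree < Q.degree) {D : ℂ → ℂ}
    (hD : Differentiable ℂ D) (h : ∀ z, D z * Q.eval z = P.eval z) : P = 0 := by
  have hQ : ∀ᶠ z in Bornology.cobounded ℂ, Q.eval z ≠ 0 :=
    Metric.cobounded_eq_cocompact (α := ℂ) ▸ cocompact_le_cofinite
      (eventually_cofinite_not_isRoot (ne_zero_of_degree_gt hPQ))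
  have hlim : Tendsto D (cocompact ℂ) (𝓝 0) := by
    rw [← Metric.cobounded_eq_cocompact]
    refine (isLittleO_cobounded_of_degree_lt hPQ).tendsto_div_nhds_zero.congr' ?_
    filter_upwards [hQ] with z hz using (eq_div_of_mul_eq hz (h z)).symm
  exact Polynomial.funext fun z => by
    rw [← h z, hD.apply_eq_of_tendsto_cocompact z hlim, zero_mul, eval_zero]

theorem exists_contDiff_hasDerivAt_clm {E : Type*} [NormedAddCommGroup E] [NormedSpace ℝ E]
    [CompleteSpace E] (A : E →L[ℝ] E) (t₀ : ℝ) (y₀ : E) :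
    ∃ y : ℝ → E, ContDiff ℝ ω y ∧ y t₀ = y₀ ∧ ∀ t, HasDerivAt y (A (y t)) t := by
  have hexp : ContDiff ℝ ω (NormedSpace.exp : (E →L[ℝ] E) → E →L[ℝ] E) :=
    AnalyticOnNhd.contDiff fun B _ => NormedSpace.exp_analytic (𝕂 := ℝ) B
  refine ⟨fun t => NormedSpace.exp ((t - t₀) • A) y₀, ?_, ?_, fun t => ?_⟩
  · exact (hexp.comp (by fun_prop : ContDiff ℝ ω fun t : ℝ => (t - t₀) • A)).clm_apply
      contDiff_const
  · simp [show (0 : ℝ) • A = 0 from zero_smul ℝ A, NormedSpace.exp_zero]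
  · have h := (hasDerivAt_exp_smul_const' (𝕂 := ℝ) A (t - t₀)).comp_sub_const t t₀
    simpa using h.clm_apply (hasDerivAt_const t y₀)

theorem eqOn_deriv_of_eqOn {𝕜 F : Type*} [NontriviallyNormedField 𝕜] [NormedAddCommGroup F]
    [NormedSpace 𝕜 F] {f g : 𝕜 → F} {s : Set 𝕜} (hs : UniqueDiffOn 𝕜 s)
    (hf : ∀ x ∈ s, DifferentiableAt 𝕜 f x) (hg : ∀ x ∈ s, DifferentiableAt 𝕜 g x)
    (hfg : EqOn f g s) : EqOn (deriv f) (deriv g) s := fun x hx => by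
  rw [← (hf x hx).derivWithin (hs x hx), ← (hg x hx).derivWithin (hs x hx)]
  exact derivWithin_congr hfg (hfg hx)

section Components

variable {𝕜 E F : Type*} [NontriviallyNormedField 𝕜] [NormedAddCommGroup E] [NormedSpace 𝕜 E]
  [NormedAddCommGroup F] [NormedSpace 𝕜 F] {f : 𝕜 → E × F} {f' : E × F} {x : 𝕜}

theorem hasDerivAt_fst (hf : HasDerivAt f f' x) : HasDerivAt (fun x => (f x).1) f'.1 x := by
  simpa using hf.hasFDerivAt.fst.hasDerivAt

theorem hasDerivAt_snd (hf : HasDerivAt f f' x) : HasDerivAt (fun x => (f x).2) f'.2 x := by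
  simpa using hf.hasFDerivAt.snd.hasDerivAt

end Components

/-- The Laplace transform of `v` cut off to the interval from `l` to `r`; unlike the full transform
it is entire for every integrable `v`. -/
noncomputable def truncatedLaplace (l r : ℝ) (v : ℝ → ℂ) (z : ℂ) : ℂ :=
  ∫ x in l..r, v x * Complex.exp (-(x * z))

theorem hasDerivAt_cexp_neg_mul (x z : ℂ) :
    HasDerivAt (fun z => Complex.exp (-(x * z))) (-x * Complex.exp (-(x * z))) z := by
  simpa [mul_comm] using ((hasDerivAt_id z).const_mul x).fun_neg.cexp

theorem differentiable_truncatedLaplace {l r : ℝ} {v : ℝ → ℂ}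
    (hv : IntervalIntegrable v MeasureTheory.volume l r) :
    Differentiable ℂ (truncatedLaplace l r v) := by
  intro z₀
  let K : ℂ → ℝ → ℂ := fun z x => -x * Complex.exp (-(x * z))
  have hK : Continuous fun q : ℂ × ℝ => K q.1 q.2 := by fun_prop
  obtain ⟨M, hM⟩ := ((isCompact_closedBall z₀ 1).prod
    (isCompact_uIcc (a := l) (b := r))).exists_bound_of_continuousOn hK.continuousOn
  have hint (k : ℝ → ℂ) (hk : Continuous k) :
      IntervalIntegrable (fun x => v x * k x) MeasureTheory.volume l r :=
    hv.mul_continuousOn hk.continuousOn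
  refine (intervalIntegral.hasDerivAt_integral_of_dominated_loc_of_deriv_le
    (F' := fun z x => v x * K z x) (bound := fun x => ‖v x‖ * M)
    (Metric.closedBall_mem_nhds z₀ one_pos) (.of_forall fun z => ?_) (hint _ (by fun_prop)) ?_
    (.of_forall fun x hx z hz => ?_) (hv.norm.mul_const M)
    (.of_forall fun x _ z _ => (hasDerivAt_cexp_neg_mul x z).const_mul (v x))).2.differentiableAt
  · exact (hint (fun x => Complex.exp (-(x * z))) (by fun_prop)).def'.aestronglyMeasurable
  · exact (hint (K z₀) (by fun_prop)).def'.aestronglyMeasurable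
  · rw [norm_mul]
    gcongr
    exact hM (z, x) ⟨hz, uIoc_subset_uIcc hx⟩

/-- The 2-jet of `v` at `x`, i.e. the Cauchy data of a third order equation. -/
noncomputable def jet (v : ℝ → ℂ) (x : ℝ) : ℂ × ℂ × ℂ :=
  (v x, deriv v x, deriv (deriv v) x)

theorem hasDerivAt_jet {v : ℝ → ℂ} (hv : ContDiff ℝ 3 v) (x : ℝ) :
    HasDerivAt (jet v) (deriv v x, deriv (deriv v) x, deriv (deriv (deriv v)) x) x := by
  have h₁ : Differentiable ℝ (deriv v) := (hv.of_le (by norm_num)).differentiable_deriv_two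
  have h₂ : Differentiable ℝ (deriv (deriv v)) :=
    (hv.iterate_deriv' 1 2).differentiable one_ne_zero
  exact (hv.differentiable (by norm_num) x).hasDerivAt.prodMk
    ((h₁ x).hasDerivAt.prodMk (h₂ x).hasDerivAt)

theorem eqOn_jet_zero {v : ℝ → ℂ} (hv : ContDiff ℝ 2 v) {s : Set ℝ} (hs : UniqueDiffOn ℝ s)
    (h : EqOn v 0 s) : EqOn (jet v) 0 s := by
  have hzero {f : ℝ → ℂ} (hf : Differentiable ℝ f) (h : EqOn f 0 s) : EqOn (deriv f) 0 s := by
    simpa [EqOn] using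
      eqOn_deriv_of_eqOn hs (fun x _ => hf x) (fun x _ => differentiableAt_const 0) h
  have h₁ := hzero (hv.differentiable two_ne_zero) h
  have h₂ := hzero hv.differentiable_deriv_two h₁
  exact fun x hx => Prod.ext (h hx) (Prod.ext (h₁ hx) (h₂ hx))

/-- `v` solves the linear equation `v''' + a v'' + b v' + c v = 0` on `s`. Regularity is required on
all of `ℝ`, so that derivatives at points of `s` are two-sided; the equation is required on `s`
only. -/
structure SolvesThirdOrderOn (a b c : ℂ) (s : Set ℝ) (v : ℝ → ℂ) : Prop where
  contDiff : ContDiff ℝ 3 v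
  ode : ∀ x ∈ s,
    deriv (deriv (deriv v)) x + a * deriv (deriv v) x + b * deriv v x + c * v x = 0

/-- The companion operator of `v''' + a v'' + b v' + c v = 0`, which turns the equation into the
first order system `y' = companion a b c y` for the 2-jet `y`; real-linear because time is real. -/
noncomputable def companion (a b c : ℂ) : (ℂ × ℂ × ℂ) →L[ℝ] ℂ × ℂ × ℂ :=
  LinearMap.toContinuousLinearMap
    { toFun := fun y => (y.2.1, y.2.2, -(a * y.2.2 + b * y.2.1 + c * y.1))
      map_add' := fun y z => by ext <;> simp; ring
      map_smul' := fun r y => by ext <;> simp; ring }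

@[simp]
theorem companion_apply (a b c : ℂ) (y : ℂ × ℂ × ℂ) :
    companion a b c y = (y.2.1, y.2.2, -(a * y.2.2 + b * y.2.1 + c * y.1)) :=
  rfl

namespace SolvesThirdOrderOn

variable {a b c : ℂ} {s t : Set ℝ} {l r : ℝ} {v : ℝ → ℂ}

theorem mono (hv : SolvesThirdOrderOn a b c t v) (hst : s ⊆ t) : SolvesThirdOrderOn a b c s v :=
  ⟨hv.contDiff, fun x hx => hv.ode x (hst hx)⟩

theorem hasDerivAt_jet_companion (hv : SolvesThirdOrderOn a b c s v) {x : ℝ} (hx : x ∈ s) :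
    HasDerivAt (jet v) (companion a b c (jet v x)) x := by
  convert hasDerivAt_jet hv.contDiff x using 1
  have hode := hv.ode x hx
  simp only [companion_apply, jet, Prod.mk.injEq, true_and]
  linear_combination -hode

theorem eqOn_zero_of_jet_eq_zero (hv : SolvesThirdOrderOn a b c (Icc l r) v) (h : jet v r = 0) :
    EqOn v 0 (Icc l r) := by
  have hjet : EqOn (jet v) (fun _ => 0) (Icc l r) :=
    ODE_solution_unique_of_mem_Icc_left (v := fun _ => companion a b c) (s := fun _ => univ)
      (K := ‖companion a b c‖₊) (fun _ _ => (companion a b c).lipschitz.lipschitzOnWith)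
      (fun x _ => (hasDerivAt_jet hv.contDiff x).continuousAt.continuousWithinAt)
      (fun x hx => (hv.hasDerivAt_jet_companion (Ioc_subset_Icc_self hx)).hasDerivWithinAt)
      (fun _ _ => mem_univ _) continuousOn_const
      (fun x _ => by simpa only [map_zero] using hasDerivWithinAt_const x (Iic x) (0 : ℂ × ℂ × ℂ))
      (fun _ _ => mem_univ _) h
  exact fun x hx => congrArg Prod.fst (hjet hx)

end SolvesThirdOrderOn

theorem exists_solvesThirdOrderOn_univ (a b c : ℂ) (x₀ : ℝ) (y₀ : ℂ × ℂ × ℂ) :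
    ∃ v, SolvesThirdOrderOn a b c univ v ∧ jet v x₀ = y₀ := by
  obtain ⟨y, hy, hy₀, hode⟩ := exists_contDiff_hasDerivAt_clm (companion a b c) x₀ y₀
  have h₁ : deriv (fun x => (y x).1) = fun x => (y x).2.1 :=
    funext fun x => (hasDerivAt_fst (hode x)).deriv
  have h₂ : deriv (fun x => (y x).2.1) = fun x => (y x).2.2 :=
    funext fun x => (hasDerivAt_fst (hasDerivAt_snd (hode x))).deriv
  have h₃ : deriv (fun x => (y x).2.2) =
      fun x => -(a * (y x).2.2 + b * (y x).2.1 + c * (y x).1) :=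
    funext fun x => (hasDerivAt_snd (hasDerivAt_snd (hode x))).deriv
  refine ⟨fun x => (y x).1, ⟨hy.fst.of_le le_top, fun x _ => ?_⟩, ?_⟩
  · rw [h₁, h₂, h₃]
    ring
  · simp only [jet, h₁, h₂, hy₀]

/-- The contribution of an endpoint with jet `y` when `v''' + a v'' + b v' + c v`, tested against
`x ↦ exp (-(x * z))`, is integrated by parts, up to the factor given by that exponential. -/
def boundarySymbol (a b : ℂ) (y : ℂ × ℂ × ℂ) (z : ℂ) : ℂ :=
  y.2.2 + (z + a) * y.2.1 + (z ^ 2 + a * z + b) * y.1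

theorem eq_of_mul_eq_boundarySymbol_sub {a b c : ℂ} {y₀ y₁ : ℂ × ℂ × ℂ} {D : ℂ → ℂ}
    (hD : Differentiable ℂ D)
    (h : ∀ z, D z * (z ^ 3 + a * z ^ 2 + b * z + c) =
      boundarySymbol a b y₀ z - boundarySymbol a b y₁ z) : y₀ = y₁ := by
  let d := y₀ - y₁
  let P : Cubic ℂ := ⟨0, d.1, a * d.1 + d.2.1, b * d.1 + a * d.2.1 + d.2.2⟩
  let Q : Cubic ℂ := ⟨1, a, b, c⟩
  have hdeg : P.toPoly.degree < Q.toPoly.degree := by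
    rw [Cubic.degree_of_a_ne_zero' one_ne_zero]
    exact Cubic.degree_of_a_eq_zero'.trans_lt (by norm_num)
  have hP : P.toPoly = 0 := eq_zero_of_mul_eval_eq_of_degree_lt hdeg hD fun z => by
    have hz := h z
    simp only [boundarySymbol] at hz
    simp only [P, Q, d, Cubic.toPoly, map_zero, map_one, map_add, map_mul, map_sub, Prod.fst_sub,
      Prod.snd_sub, eval_add, eval_sub, eval_mul, eval_pow, eval_C, eval_X, zero_mul, zero_add,
      one_mul]
    linear_combination hz
  obtain ⟨-, hd₀, hd₁, hd₂⟩ := Cubic.ext_iff.mp ((Cubic.toPoly_eq_zero_iff P).mp hP)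
  change d.1 = 0 at hd₀
  change a * d.1 + d.2.1 = 0 at hd₁
  change b * d.1 + a * d.2.1 + d.2.2 = 0 at hd₂
  have hd₁' : d.2.1 = 0 := by linear_combination hd₁ - a * hd₀
  have hd₂' : d.2.2 = 0 := by linear_combination hd₂ - b * hd₀ - a * hd₁'
  exact sub_eq_zero.mp (Prod.ext hd₀ (Prod.ext hd₁' hd₂'))

theorem SolvesThirdOrderOn.truncatedLaplace_mul {a b c : ℂ} {l r : ℝ} {v : ℝ → ℂ}
    (hv : SolvesThirdOrderOn a b c (uIcc l r) v) (z : ℂ) :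
    truncatedLaplace l r v z * (z ^ 3 + a * z ^ 2 + b * z + c) =
      Complex.exp (-(l * z)) * boundarySymbol a b (jet v l) z -
        Complex.exp (-(r * z)) * boundarySymbol a b (jet v r) z := by
  have hderiv : ∀ x ∈ uIcc l r, HasDerivAt
      (fun x : ℝ => -(Complex.exp (-(x * z)) * boundarySymbol a b (jet v x) z))
      (v x * Complex.exp (-(x * z)) * (z ^ 3 + a * z ^ 2 + b * z + c)) x := by
    intro x hx
    have hexp : HasDerivAt (fun x : ℝ => Complex.exp (-(x * z)))
        (-z * Complex.exp (-(x * z))) x := by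
      simpa only [mul_comm] using (hasDerivAt_cexp_neg_mul z x).comp_ofReal
    have hjet := hasDerivAt_jet hv.contDiff x
    have hsymbol : HasDerivAt (fun x => boundarySymbol a b (jet v x) z)
        (boundarySymbol a b (deriv v x, deriv (deriv v) x, deriv (deriv (deriv v)) x) z) x :=
      ((hasDerivAt_snd (hasDerivAt_snd hjet)).fun_add
        ((hasDerivAt_fst (hasDerivAt_snd hjet)).const_mul (z + a))).fun_add
          ((hasDerivAt_fst hjet).const_mul (z ^ 2 + a * z + b))
    refine (hexp.fun_mul hsymbol).fun_neg.congr_deriv ?_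
    have hode := hv.ode x hx
    simp only [boundarySymbol, jet]
    linear_combination -Complex.exp (-(x * z)) * hode
  have hint : IntervalIntegrable
      (fun x => v x * Complex.exp (-(x * z)) * (z ^ 3 + a * z ^ 2 + b * z + c))
      MeasureTheory.volume l r := by
    have := hv.contDiff.continuous
    exact Continuous.intervalIntegrable (by fun_prop) l r
  rw [truncatedLaplace, ← intervalIntegral.integral_mul_const,
    intervalIntegral.integral_eq_sub_of_hasDerivAt hderiv hint]
  ring

theorem exists_differentiable_mul_eq_boundarySymbol_iff (a b c : ℂ) (l r : ℝ)
    (y₀ y₁ : ℂ × ℂ × ℂ) :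
    (∃ Φ : ℂ → ℂ, Differentiable ℂ Φ ∧ ∀ z, Φ z * (z ^ 3 + a * z ^ 2 + b * z + c) =
      Complex.exp (-(l * z)) * boundarySymbol a b y₀ z -
        Complex.exp (-(r * z)) * boundarySymbol a b y₁ z) ↔
    ∃ v, SolvesThirdOrderOn a b c (uIcc l r) v ∧ jet v l = y₀ ∧ jet v r = y₁ := by
  have hlaplace {v : ℝ → ℂ} (hv : ContDiff ℝ 3 v) : Differentiable ℂ (truncatedLaplace l r v) :=
    differentiable_truncatedLaplace (hv.continuous.intervalIntegrable l r)
  constructor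
  · rintro ⟨Φ, hΦ, hΦeq⟩
    obtain ⟨v, hv, hvr⟩ := exists_solvesThirdOrderOn_univ a b c r y₁
    have hvlr := hv.mono (subset_univ (uIcc l r))
    refine ⟨v, hvlr, ?_, hvr⟩
    symm
    refine eq_of_mul_eq_boundarySymbol_sub (a := a) (b := b) (c := c)
      (D := fun z => Complex.exp (l * z) * (Φ z - truncatedLaplace l r v z))
      (by have := hlaplace hv.contDiff; fun_prop) fun z => ?_
    have hexp : Complex.exp (l * z) * Complex.exp (-(l * z)) = 1 := by
      rw [← Complex.exp_add, add_neg_cancel, Complex.exp_zero]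
    have hv_eq := hvlr.truncatedLaplace_mul z
    rw [hvr] at hv_eq
    linear_combination Complex.exp (l * z) * (hΦeq z - hv_eq) +
      (boundarySymbol a b y₀ z - boundarySymbol a b (jet v l) z) * hexp
  · rintro ⟨v, hv, rfl, rfl⟩
    exact ⟨truncatedLaplace l r v, hlaplace hv.contDiff, hv.truncatedLaplace_mul⟩

section LinearCombination

variable {f g : ℝ → ℂ} (r s : ℂ)

theorem deriv_smul_add_smul (hf : Differentiable ℝ f) (hg : Differentiable ℝ g) :
    deriv (r • f + s • g) = r • deriv f + s • deriv g :=
  funext fun x => (((hf x).hasDerivAt.const_smul r).add ((hg x).hasDerivAt.const_smul s)).deriv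

theorem jet_smul_add_smul (hf : ContDiff ℝ 2 f) (hg : ContDiff ℝ 2 g) (x : ℝ) :
    jet (r • f + s • g) x = r • jet f x + s • jet g x := by
  simp only [jet,
    deriv_smul_add_smul r s (hf.differentiable two_ne_zero) (hg.differentiable two_ne_zero),
    deriv_smul_add_smul r s hf.differentiable_deriv_two hg.differentiable_deriv_two]
  rfl

theorem deriv_deriv_deriv_smul_add_smul (hf : ContDiff ℝ 3 f) (hg : ContDiff ℝ 3 g) :
    deriv (deriv (deriv (r • f + s • g))) =
      r • deriv (deriv (deriv f)) + s • deriv (deriv (deriv g)) := by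
  rw [deriv_smul_add_smul r s (hf.differentiable three_ne_zero) (hg.differentiable three_ne_zero)]
  have hf' : ContDiff ℝ 2 (deriv f) := hf.iterate_deriv' 2 1
  have hg' : ContDiff ℝ 2 (deriv g) := hg.iterate_deriv' 2 1
  rw [deriv_smul_add_smul r s (hf'.differentiable two_ne_zero) (hg'.differentiable two_ne_zero),
    deriv_smul_add_smul r s hf'.differentiable_deriv_two hg'.differentiable_deriv_two]

end LinearCombination

/-- `(θ, u)` is a nonzero eigenfunction of the linearized Boussinesq system on `[0, L]` with
eigenvalue `lam` and the boundary conditions of the theorem. -/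
def IsBoussinesqMode (L : ℝ) (lam : ℂ) (θ u : ℝ → ℂ) : Prop :=
  ContDiff ℝ 3 θ ∧ ContDiff ℝ 3 u ∧
  ¬(∀ x ∈ Icc (0 : ℝ) L, θ x = 0 ∧ u x = 0) ∧
  (∀ x ∈ Icc (0 : ℝ) L, -deriv u x - deriv (deriv (deriv u)) x = lam * θ x) ∧
  (∀ x ∈ Icc (0 : ℝ) L, -deriv θ x - deriv (deriv (deriv θ)) x = lam * u x) ∧
  θ 0 = 0 ∧ θ L = 0 ∧ deriv θ 0 = 0 ∧ deriv (deriv θ) L = 0 ∧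
  u 0 = 0 ∧ u L = 0 ∧ deriv u L = 0

/-- `(v, w)` solves the decoupled system satisfied by `v = u + θ` and `w = u - θ`, where `(θ, u)` is
a Boussinesq mode. The boundary conditions leave five free endpoint derivatives; they are named
after the coefficients of the entire quotients in which they appear. -/
structure IsDecoupledPair (L : ℝ) (lam α α' β γ γ' : ℂ) (v w : ℝ → ℂ) : Prop where
  fst : SolvesThirdOrderOn 0 1 lam (Icc 0 L) v
  snd : SolvesThirdOrderOn 0 1 (-lam) (Icc 0 L) w
  jet_fst_zero : jet v 0 = (0, β, α)
  jet_fst_length : jet v L = (0, -γ', -γ)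
  jet_snd_zero : jet w 0 = (0, β, α')
  jet_snd_length : jet w L = (0, γ', -γ)

theorem solvesThirdOrderOn_add_smul {lam ε : ℂ} (hε : ε ^ 2 = 1) {s : Set ℝ} {θ u : ℝ → ℂ}
    (hθ : ContDiff ℝ 3 θ) (hu : ContDiff ℝ 3 u)
    (hu_eq : ∀ x ∈ s, -deriv u x - deriv (deriv (deriv u)) x = lam * θ x)
    (hθ_eq : ∀ x ∈ s, -deriv θ x - deriv (deriv (deriv θ)) x = lam * u x) :
    SolvesThirdOrderOn 0 1 (ε * lam) s ((1 : ℂ) • u + ε • θ) where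
  contDiff := (hu.const_smul (1 : ℂ)).add (hθ.const_smul ε)
  ode x hx := by
    rw [deriv_deriv_deriv_smul_add_smul 1 ε hu hθ, deriv_smul_add_smul 1 ε
      (hu.differentiable three_ne_zero) (hθ.differentiable three_ne_zero)]
    simp only [Pi.add_apply, Pi.smul_apply, smul_eq_mul]
    linear_combination -hu_eq x hx - ε * hθ_eq x hx + lam * θ x * hε

namespace IsDecoupledPair

variable {L : ℝ} {lam α α' β γ γ' : ℂ} {v w : ℝ → ℂ}

theorem coeffs_eq_zero_iff (h : IsDecoupledPair L lam α α' β γ γ' v w) (hL : 0 < L) :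
    (α, α', β, γ, γ') = (0, 0, 0, 0, 0) ↔ EqOn v 0 (Icc 0 L) ∧ EqOn w 0 (Icc 0 L) := by
  constructor
  · intro hcoeffs
    obtain ⟨rfl, rfl, rfl, rfl, rfl⟩ := by simpa only [Prod.mk.injEq] using hcoeffs
    exact ⟨h.fst.eqOn_zero_of_jet_eq_zero (by simpa using! h.jet_fst_length),
      h.snd.eqOn_zero_of_jet_eq_zero (by simpa using! h.jet_snd_length)⟩
  · rintro ⟨hv, hw⟩
    have hjv := eqOn_jet_zero (h.fst.contDiff.of_le (by norm_num)) (uniqueDiffOn_Icc hL) hv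
    have hjw := eqOn_jet_zero (h.snd.contDiff.of_le (by norm_num)) (uniqueDiffOn_Icc hL) hw
    have hv₀ := h.jet_fst_zero.symm.trans (hjv (left_mem_Icc.mpr hL.le))
    have hvL := h.jet_fst_length.symm.trans (hjv (right_mem_Icc.mpr hL.le))
    have hw₀ := h.jet_snd_zero.symm.trans (hjw (left_mem_Icc.mpr hL.le))
    simp_all [Prod.ext_iff]

theorem neg_deriv_sub_deriv_smul_add_smul (h : IsDecoupledPair L lam α α' β γ γ' v w) (r s : ℂ)
    {x : ℝ} (hx : x ∈ Icc 0 L) :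
    -deriv (r • v + s • w) x - deriv (deriv (deriv (r • v + s • w))) x =
      lam * (r * v x - s * w x) := by
  have hv := h.fst.contDiff
  have hw := h.snd.contDiff
  rw [deriv_deriv_deriv_smul_add_smul r s hv hw, deriv_smul_add_smul r s
    (hv.differentiable three_ne_zero) (hw.differentiable three_ne_zero)]
  simp only [Pi.add_apply, Pi.smul_apply, smul_eq_mul]
  linear_combination -r * h.fst.ode x hx - s * h.snd.ode x hx

theorem jet_smul_add_smul_zero (h : IsDecoupledPair L lam α α' β γ γ' v w) (r s : ℂ) :
    jet (r • v + s • w) 0 = (0, (r + s) * β, r * α + s * α') := by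
  rw [jet_smul_add_smul r s (h.fst.contDiff.of_le (by norm_num))
    (h.snd.contDiff.of_le (by norm_num)), h.jet_fst_zero, h.jet_snd_zero]
  simp [add_mul]

theorem jet_smul_add_smul_length (h : IsDecoupledPair L lam α α' β γ γ' v w) (r s : ℂ) :
    jet (r • v + s • w) L = (0, (s - r) * γ', -(r + s) * γ) := by
  rw [jet_smul_add_smul r s (h.fst.contDiff.of_le (by norm_num))
    (h.snd.contDiff.of_le (by norm_num)), h.jet_fst_length, h.jet_snd_length]
  ext <;> simp <;> ring

theorem isBoussinesqMode (h : IsDecoupledPair L lam α α' β γ γ' v w) (hL : 0 < L)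
    (hne : (α, α', β, γ, γ') ≠ (0, 0, 0, 0, 0)) :
    IsBoussinesqMode L lam ((1 / 2 : ℂ) • v + (-1 / 2 : ℂ) • w)
      ((1 / 2 : ℂ) • v + (1 / 2 : ℂ) • w) := by
  have hcontDiff (r s : ℂ) : ContDiff ℝ 3 (r • v + s • w) :=
    (h.fst.contDiff.const_smul r).add (h.snd.contDiff.const_smul s)
  have hθ₀ := h.jet_smul_add_smul_zero (1 / 2) (-1 / 2)
  have hθL := h.jet_smul_add_smul_length (1 / 2) (-1 / 2)
  have hu₀ := h.jet_smul_add_smul_zero (1 / 2) (1 / 2)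
  have huL := h.jet_smul_add_smul_length (1 / 2) (1 / 2)
  simp only [jet, Prod.mk.injEq] at hθ₀ hθL hu₀ huL
  refine ⟨hcontDiff _ _, hcontDiff _ _,
    fun hzero => hne ((h.coeffs_eq_zero_iff hL).mpr ⟨fun x hx => ?_, fun x hx => ?_⟩),
    fun x hx => ?_, fun x hx => ?_, hθ₀.1, hθL.1, ?_, ?_, hu₀.1, huL.1, ?_⟩
  · change v x = 0
    obtain ⟨hθx, hux⟩ := hzero x hx
    simp only [Pi.add_apply, Pi.smul_apply, smul_eq_mul] at hθx hux
    linear_combination hθx + hux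
  · change w x = 0
    obtain ⟨hθx, hux⟩ := hzero x hx
    simp only [Pi.add_apply, Pi.smul_apply, smul_eq_mul] at hθx hux
    linear_combination hux - hθx
  · rw [h.neg_deriv_sub_deriv_smul_add_smul _ _ hx]
    simp only [Pi.add_apply, Pi.smul_apply, smul_eq_mul]
    ring
  · rw [h.neg_deriv_sub_deriv_smul_add_smul _ _ hx]
    simp only [Pi.add_apply, Pi.smul_apply, smul_eq_mul]
    ring
  · linear_combination hθ₀.2.1
  · linear_combination hθL.2.2
  · linear_combination huL.2.1

end IsDecoupledPair

theorem IsBoussinesqMode.exists_isDecoupledPair {L : ℝ} {lam : ℂ} {θ u : ℝ → ℂ} (hL : 0 < L)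
    (h : IsBoussinesqMode L lam θ u) :
    ∃ α α' β γ γ' : ℂ, (α, α', β, γ, γ') ≠ (0, 0, 0, 0, 0) ∧
      ∃ v w, IsDecoupledPair L lam α α' β γ γ' v w := by
  obtain ⟨hθ, hu, hne, hu_eq, hθ_eq, hθ₀, hθL, hθ₀', hθL'', hu₀, huL, huL'⟩ := h
  have hsolves {ε : ℂ} (hε : ε ^ 2 = 1) := solvesThirdOrderOn_add_smul hε hθ hu hu_eq hθ_eq
  have hjet (ε : ℂ) (x : ℝ) : jet ((1 : ℂ) • u + ε • θ) x = (1 : ℂ) • jet u x + ε • jet θ x :=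
    jet_smul_add_smul 1 ε (hu.of_le (by norm_num)) (hθ.of_le (by norm_num)) x
  have hpair : IsDecoupledPair L lam (deriv (deriv u) 0 + deriv (deriv θ) 0)
      (deriv (deriv u) 0 - deriv (deriv θ) 0) (deriv u 0) (-deriv (deriv u) L) (-deriv θ L)
      ((1 : ℂ) • u + (1 : ℂ) • θ) ((1 : ℂ) • u + (-1 : ℂ) • θ) :=
    { fst := by simpa only [one_mul] using hsolves (one_pow 2)
      snd := by simpa only [neg_one_mul] using hsolves neg_one_sq
      jet_fst_zero := by rw [hjet]; simp [jet, hθ₀, hθ₀', hu₀]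
      jet_fst_length := by rw [hjet]; simp [jet, hθL, hθL'', huL, huL']
      jet_snd_zero := by rw [hjet]; simp [jet, hθ₀, hθ₀', hu₀, sub_eq_add_neg]
      jet_snd_length := by rw [hjet]; simp [jet, hθL, hθL'', huL, huL'] }
  refine ⟨_, _, _, _, _, fun hcoeffs => hne fun x hx => ?_, _, _, hpair⟩
  obtain ⟨hv, hw⟩ := (hpair.coeffs_eq_zero_iff hL).mp hcoeffs
  have hvx := hv hx
  have hwx := hw hx
  simp only [Pi.add_apply, Pi.smul_apply, smul_eq_mul, Pi.zero_apply] at hvx hwx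
  exact ⟨by linear_combination (hvx - hwx) / 2, by linear_combination (hvx + hwx) / 2⟩

theorem exists_isBoussinesqMode_iff {L : ℝ} (hL : 0 < L) :
    (∃ (lam : ℂ) (θ u : ℝ → ℂ), IsBoussinesqMode L lam θ u) ↔
      ∃ lam α α' β γ γ' : ℂ, (α, α', β, γ, γ') ≠ (0, 0, 0, 0, 0) ∧
        ∃ v w, IsDecoupledPair L lam α α' β γ γ' v w :=
  ⟨fun ⟨lam, _, _, h⟩ => ⟨lam, h.exists_isDecoupledPair hL⟩,
    fun ⟨lam, _, _, _, _, _, hne, _, _, h⟩ => ⟨lam, _, _, h.isBoussinesqMode hL hne⟩⟩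

theorem exists_differentiable_mul_eq_rescale_iff {k m : ℂ} (hk : k ≠ 0) (hm : m ≠ 0)
    {Q R Q' R' : ℂ → ℂ} (hQ : ∀ z, Q (m * z) = k * Q' z) (hR : ∀ z, R (m * z) = R' z) :
    (∃ F, Differentiable ℂ F ∧ ∀ ξ, F ξ * Q ξ = R ξ) ↔
      ∃ Φ, Differentiable ℂ Φ ∧ ∀ z, Φ z * Q' z = R' z := by
  constructor
  · rintro ⟨F, hF, hFQ⟩
    refine ⟨fun z => k * F (m * z), by fun_prop, fun z => ?_⟩
    rw [← hR, ← hFQ, hQ]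
    ring
  · rintro ⟨Φ, hΦ, hΦQ⟩
    refine ⟨fun ξ => k⁻¹ * Φ (m⁻¹ * ξ), by fun_prop, fun ξ => ?_⟩
    obtain ⟨z, rfl⟩ : ∃ z, ξ = m * z := ⟨m⁻¹ * ξ, by field_simp⟩
    simp only [hQ, hR, ← hΦQ, inv_mul_cancel_left₀ hm]
    field_simp

section EntireQuotient

open Complex

variable {L : ℝ} (hL : 0 ≤ L) (lam α β γ γ' : ℂ)
include hL

theorem exists_entire_quotient_iff_fst :
    (∃ F, Differentiable ℂ F ∧ ∀ ξ : ℂ, F ξ * (ξ ^ 3 - ξ + I * lam) =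
      α + I * β * ξ + γ * exp (-(I * L * ξ)) + I * γ' * ξ * exp (-(I * L * ξ))) ↔
    ∃ v, SolvesThirdOrderOn 0 1 lam (Icc 0 L) v ∧
      jet v 0 = (0, β, α) ∧ jet v L = (0, -γ', -γ) := by
  rw [← uIcc_of_le hL, ← exists_differentiable_mul_eq_boundarySymbol_iff]
  refine exists_differentiable_mul_eq_rescale_iff I_ne_zero (neg_ne_zero.mpr I_ne_zero)
    (fun z => ?_) fun z => ?_
  · linear_combination (-I * z ^ 3) * I_sq
  · have hexp : -(I * L * (-I * z)) = -(L * z) := by linear_combination L * z * I_sq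
    simp only [hexp, boundarySymbol, ofReal_zero, zero_mul, neg_zero, exp_zero]
    linear_combination (-β * z - γ' * z * exp (-(L * z))) * I_sq

theorem exists_entire_quotient_iff_snd :
    (∃ G, Differentiable ℂ G ∧ ∀ ξ : ℂ, G ξ * (ξ ^ 3 - ξ + I * lam) =
      α - I * β * ξ + γ * exp (I * L * ξ) + I * γ' * ξ * exp (I * L * ξ)) ↔
    ∃ w, SolvesThirdOrderOn 0 1 (-lam) (Icc 0 L) w ∧
      jet w 0 = (0, β, α) ∧ jet w L = (0, γ', -γ) := by
  rw [← uIcc_of_le hL, ← exists_differentiable_mul_eq_boundarySymbol_iff]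
  refine exists_differentiable_mul_eq_rescale_iff (neg_ne_zero.mpr I_ne_zero) I_ne_zero
    (fun z => ?_) fun z => ?_
  · linear_combination (I * z ^ 3) * I_sq
  · have hexp : I * L * (I * z) = -(L * z) := by linear_combination L * z * I_sq
    simp only [hexp, boundarySymbol, ofReal_zero, zero_mul, neg_zero, exp_zero]
    linear_combination (-β * z + γ' * z * exp (-(L * z))) * I_sq

end EntireQuotient

/-- The spectral problem with boundary conditions `θ(0)=θ(L)=θ′(0)=θ″(L)=0`,
`u(0)=u(L)=u′(L)=0` has a nontrivial solution iff there are `p` and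
`(α, α′, β, γ, γ′) ≠ 0` such that both
`(α + iβξ + γe^{−iLξ} + iγ′ξe^{−iLξ})/(ξ³−ξ+p)` and
`(α′ − iβξ + γe^{iLξ} + iγ′ξe^{iLξ})/(ξ³−ξ+p)` are entire functions. -/
theorem statement_12 (L : ℝ) (hL : 0 < L) :
    (∃ (lam : ℂ) (θ u : ℝ → ℂ),
      ContDiff ℝ 3 θ ∧ ContDiff ℝ 3 u ∧
      ¬(∀ x ∈ Icc (0 : ℝ) L, θ x = 0 ∧ u x = 0) ∧
      (∀ x ∈ Icc (0 : ℝ) L, -deriv u x - deriv (deriv (deriv u)) x = lam * θ x) ∧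
      (∀ x ∈ Icc (0 : ℝ) L, -deriv θ x - deriv (deriv (deriv θ)) x = lam * u x) ∧
      θ 0 = 0 ∧ θ L = 0 ∧ deriv θ 0 = 0 ∧ deriv (deriv θ) L = 0 ∧
      u 0 = 0 ∧ u L = 0 ∧ deriv u L = 0) ↔
    (∃ (p α α' β γ γ' : ℂ), (α, α', β, γ, γ') ≠ (0, 0, 0, 0, 0) ∧
      ∃ F G : ℂ → ℂ, Differentiable ℂ F ∧ Differentiable ℂ G ∧
        (∀ ξ : ℂ, F ξ * (ξ^3 - ξ + p)
          = α + Complex.I * β * ξ + γ * Complex.exp (-(Complex.I * (L : ℂ) * ξ))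
            + Complex.I * γ' * ξ * Complex.exp (-(Complex.I * (L : ℂ) * ξ))) ∧
        (∀ ξ : ℂ, G ξ * (ξ^3 - ξ + p)
          = α' - Complex.I * β * ξ + γ * Complex.exp (Complex.I * (L : ℂ) * ξ)
            + Complex.I * γ' * ξ * Complex.exp (Complex.I * (L : ℂ) * ξ))) := by
  refine (exists_isBoussinesqMode_iff hL).trans
    (Iff.trans ?_ (mul_left_surjective₀ Complex.I_ne_zero).exists.symm)
  congr! with lam α α' β γ γ'
  constructor
  · rintro ⟨v, w, h⟩
    obtain ⟨F, hF, hFeq⟩ := (exists_entire_quotient_iff_fst hL.le lam α β γ γ').mpr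
      ⟨v, h.fst, h.jet_fst_zero, h.jet_fst_length⟩
    obtain ⟨G, hG, hGeq⟩ := (exists_entire_quotient_iff_snd hL.le lam α' β γ γ').mpr
      ⟨w, h.snd, h.jet_snd_zero, h.jet_snd_length⟩
    exact ⟨F, G, hF, hG, hFeq, hGeq⟩
  · rintro ⟨F, G, hF, hG, hFeq, hGeq⟩
    obtain ⟨v, hv, hv₀, hvL⟩ :=
      (exists_entire_quotient_iff_fst hL.le lam α β γ γ').mp ⟨F, hF, hFeq⟩
    obtain ⟨w, hw, hw₀, hwL⟩ :=
      (exists_entire_quotient_iff_snd hL.le lam α' β γ γ').mp ⟨G, hG, hGeq⟩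
    exact ⟨v, w, hv, hw, hv₀, hvL, hw₀, hwL⟩
end

section
/- Let L > 0, T > 0, α ∈ ℝ, and let (η, v) be a pair of real-valued functions on [0,T] × [0,L] whose partial derivatives ∂_t η, ∂_t v and ∂_x^j η, ∂_x^j v for j ≤ 3 exist and are continuous, which satisfy η_t + v_x + v_{xxx} = 0 and v_t + η_x + η_{xxx} = 0 on [0,T] × [0,L], with boundary conditions η(t,0) = η(t,L) = η_x(t,0) = 0, v(t,0) = v(t,L) = 0, and the feedback condition v_x(t,L) = −α·η_x(t,L) for all t ∈ [0,T]. Then (1/2)·∫₀^L [η(T,x)² + v(T,x)²] dx − (1/2)·∫₀^L [η(0,x)² + v(0,x)²] dx + α·∫₀^T η_x(t,L)² dt = 0. -/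
open Set MeasureTheory

/-- Partial derivative in the first (time) variable. -/
noncomputable def pt (f : ℝ → ℝ → ℝ) : ℝ → ℝ → ℝ := fun t x => deriv (fun s => f s x) t

/-- Partial derivative in the second (space) variable. -/
noncomputable def px (f : ℝ → ℝ → ℝ) : ℝ → ℝ → ℝ := fun t x => deriv (fun y => f t y) x

/-!
Multiplying the first equation by `η`, the second by `v` and adding, the rate of change of the
energy density `(η² + v²) / 2` is `-(η (v_x + v_xxx) + (η_x + η_xxx) v)`, an exact space derivative:
the bracket is the derivative of the flux `η v + η v_xx + η_xx v - η_x v_x`. Under the Dirichlet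
conditions only `η_x v_x` survives at the endpoints; it vanishes at `0`, and the feedback law turns
it into `-α η_x²` at `L`.
-/

open Function

section FundamentalTheorem

variable {E : Type*} [NormedAddCommGroup E] [NormedSpace ℝ E] [CompleteSpace E]

theorem integral_eq_sub_of_hasDerivWithinAt_uIcc {f f' : ℝ → E} {a b : ℝ}
    (hderiv : ∀ x ∈ uIcc a b, HasDerivWithinAt f (f' x) (uIcc a b) x)
    (hint : IntervalIntegrable f' volume a b) : ∫ x in a..b, f' x = f b - f a :=
  intervalIntegral.integral_eq_sub_of_hasDeriv_right
    (fun x hx => (hderiv x hx).continuousWithinAt)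
    (fun x hx => ((hderiv x (Ioo_subset_Icc_self hx)).hasDerivAt
      (Icc_mem_nhds hx.1 hx.2)).hasDerivWithinAt) hint

theorem integral_integral_eq_integral_sub_integral_of_hasDerivWithinAt
    {f f' : ℝ → ℝ → E} {a b c d : ℝ}
    (hderiv : ∀ x ∈ uIcc a b, ∀ t ∈ uIcc c d,
      HasDerivWithinAt (fun s => f s x) (f' t x) (uIcc c d) t)
    (hcont : ContinuousOn (uncurry f') (uIcc c d ×ˢ uIcc a b))
    (hfc : IntervalIntegrable (f c) volume a b) (hfd : IntervalIntegrable (f d) volume a b) :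
    ∫ t in c..d, ∫ x in a..b, f' t x = (∫ x in a..b, f d x) - ∫ x in a..b, f c x := by
  have hint : IntegrableOn (uncurry f') (uIoc c d ×ˢ uIoc a b) (volume.prod volume) :=
    (hcont.integrableOn_compact (isCompact_uIcc.prod isCompact_uIcc)).mono_set
      (prod_mono uIoc_subset_uIcc uIoc_subset_uIcc)
  calc ∫ t in c..d, ∫ x in a..b, f' t x
      = ∫ x in a..b, ∫ t in c..d, f' t x := intervalIntegral_intervalIntegral_swap hint
    _ = ∫ x in a..b, (f d x - f c x) := by
      refine intervalIntegral.integral_congr fun x hx =>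
        integral_eq_sub_of_hasDerivWithinAt_uIcc (hderiv x hx) ?_
      exact (hcont.uncurry_right x hx).intervalIntegrable
    _ = (∫ x in a..b, f d x) - ∫ x in a..b, f c x := intervalIntegral.integral_sub hfd hfc

end FundamentalTheorem

/-- `f₁`, `f₂`, `f₃` are the successive derivatives of `f` on `s`, taken within `s`. On a space
interval `s` this is the regularity of one time slice of a classical solution; the derivatives are
data rather than `deriv` terms, so that values of `f` outside `s` never matter. -/
structure HasThreeDerivsOn {𝕜 F : Type*} [NontriviallyNormedField 𝕜] [NormedAddCommGroup F]
    [NormedSpace 𝕜 F] (f f₁ f₂ f₃ : 𝕜 → F) (s : Set 𝕜) : Prop where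
  hasDeriv₁ : ∀ x ∈ s, HasDerivWithinAt f (f₁ x) s x
  hasDeriv₂ : ∀ x ∈ s, HasDerivWithinAt f₁ (f₂ x) s x
  hasDeriv₃ : ∀ x ∈ s, HasDerivWithinAt f₂ (f₃ x) s x

namespace HasThreeDerivsOn

theorem of_contDiff {𝕜 F : Type*} [NontriviallyNormedField 𝕜] [NormedAddCommGroup F]
    [NormedSpace 𝕜 F] {f : 𝕜 → F} (hf : ContDiff 𝕜 3 f) (s : Set 𝕜) :
    HasThreeDerivsOn f (deriv f) (deriv (deriv f)) (deriv (deriv (deriv f))) s := by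
  have hf₁ : ContDiff 𝕜 2 (deriv f) := ContDiff.deriv' (by simpa [two_add_one_eq_three] using hf)
  have hf₂ : ContDiff 𝕜 1 (deriv (deriv f)) :=
    ContDiff.deriv' (by simpa [one_add_one_eq_two] using hf₁)
  exact
    { hasDeriv₁ := fun x _ => (hf.differentiable (by norm_num) x).hasDerivAt.hasDerivWithinAt
      hasDeriv₂ := fun x _ => (hf₁.differentiable (by norm_num) x).hasDerivAt.hasDerivWithinAt
      hasDeriv₃ := fun x _ => (hf₂.differentiable (by norm_num) x).hasDerivAt.hasDerivWithinAt }

theorem hasDerivWithinAt_flux {𝕜 A : Type*} [NontriviallyNormedField 𝕜] [NormedCommRing A]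
    [NormedAlgebra 𝕜 A] {f f₁ f₂ f₃ g g₁ g₂ g₃ : 𝕜 → A} {s : Set 𝕜} {x : 𝕜}
    (hf : HasThreeDerivsOn f f₁ f₂ f₃ s) (hg : HasThreeDerivsOn g g₁ g₂ g₃ s) (hx : x ∈ s) :
    HasDerivWithinAt (fun y => f y * g y + f y * g₂ y + f₂ y * g y - f₁ y * g₁ y)
      (f x * (g₁ x + g₃ x) + (f₁ x + f₃ x) * g x) s x := by
  have hfg := (hf.hasDeriv₁ x hx).mul (hg.hasDeriv₁ x hx)
  have hfg₂ := (hf.hasDeriv₁ x hx).mul (hg.hasDeriv₃ x hx)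
  have hf₂g := (hf.hasDeriv₃ x hx).mul (hg.hasDeriv₁ x hx)
  have hf₁g₁ := (hf.hasDeriv₂ x hx).mul (hg.hasDeriv₂ x hx)
  exact (((hfg.add hfg₂).add hf₂g).sub hf₁g₁).congr_deriv (by ring)

theorem integral_energy_rate_of_dirichlet {A : Type*} [NormedCommRing A] [NormedAlgebra ℝ A]
    [CompleteSpace A] {f f₁ f₂ f₃ g g₁ g₂ g₃ f' g' : ℝ → A} {a b : ℝ}
    (hf : HasThreeDerivsOn f f₁ f₂ f₃ (uIcc a b)) (hg : HasThreeDerivsOn g g₁ g₂ g₃ (uIcc a b))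
    (hf' : ∀ x ∈ uIcc a b, f' x + g₁ x + g₃ x = 0) (hg' : ∀ x ∈ uIcc a b, g' x + f₁ x + f₃ x = 0)
    (hfa : f a = 0) (hfb : f b = 0) (hga : g a = 0) (hgb : g b = 0)
    (hint : IntervalIntegrable (fun x => f x * f' x + g x * g' x) volume a b) :
    ∫ x in a..b, (f x * f' x + g x * g' x) = f₁ b * g₁ b - f₁ a * g₁ a := by
  have hflux : ∀ x ∈ uIcc a b,
      HasDerivWithinAt (fun y => -(f y * g y + f y * g₂ y + f₂ y * g y - f₁ y * g₁ y))
        (f x * f' x + g x * g' x) (uIcc a b) x := fun x hx =>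
    (hf.hasDerivWithinAt_flux hg hx).fun_neg.congr_deriv (by
      linear_combination -f x * hf' x hx - g x * hg' x hx)
  rw [integral_eq_sub_of_hasDerivWithinAt_uIcc hflux hint, hfa, hfb, hga, hgb]
  ring

end HasThreeDerivsOn

theorem statement_16_general {L T α : ℝ} {η ηt ηx ηxx ηxxx v vt vx vxx vxxx : ℝ → ℝ → ℝ}
    (hηt : ∀ x ∈ uIcc 0 L, ∀ t ∈ uIcc 0 T,
      HasDerivWithinAt (fun s => η s x) (ηt t x) (uIcc 0 T) t)
    (hvt : ∀ x ∈ uIcc 0 L, ∀ t ∈ uIcc 0 T,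
      HasDerivWithinAt (fun s => v s x) (vt t x) (uIcc 0 T) t)
    (hηx : ∀ t ∈ uIcc 0 T, HasThreeDerivsOn (η t) (ηx t) (ηxx t) (ηxxx t) (uIcc 0 L))
    (hvx : ∀ t ∈ uIcc 0 T, HasThreeDerivsOn (v t) (vx t) (vxx t) (vxxx t) (uIcc 0 L))
    (hηc : ContinuousOn (uncurry η) (uIcc 0 T ×ˢ uIcc 0 L))
    (hvc : ContinuousOn (uncurry v) (uIcc 0 T ×ˢ uIcc 0 L))
    (hηtc : ContinuousOn (uncurry ηt) (uIcc 0 T ×ˢ uIcc 0 L))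
    (hvtc : ContinuousOn (uncurry vt) (uIcc 0 T ×ˢ uIcc 0 L))
    (heq1 : ∀ t ∈ uIcc 0 T, ∀ x ∈ uIcc 0 L, ηt t x + vx t x + vxxx t x = 0)
    (heq2 : ∀ t ∈ uIcc 0 T, ∀ x ∈ uIcc 0 L, vt t x + ηx t x + ηxxx t x = 0)
    (hbη : ∀ t ∈ uIcc 0 T, η t 0 = 0 ∧ η t L = 0 ∧ ηx t 0 = 0)
    (hbv : ∀ t ∈ uIcc 0 T, v t 0 = 0 ∧ v t L = 0)
    (hfb : ∀ t ∈ uIcc 0 T, vx t L = -α * ηx t L) :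
    (1/2) * (∫ x in (0:ℝ)..L, ((η T x)^2 + (v T x)^2))
      - (1/2) * (∫ x in (0:ℝ)..L, ((η 0 x)^2 + (v 0 x)^2))
      + α * (∫ t in (0:ℝ)..T, (ηx t L)^2) = 0 := by
  have hrate_cont : ContinuousOn (uncurry fun t x => η t x * ηt t x + v t x * vt t x)
      (uIcc 0 T ×ˢ uIcc 0 L) := (hηc.mul hηtc).add (hvc.mul hvtc)
  have hrate_integral : ∀ t ∈ uIcc 0 T,
      ∫ x in (0:ℝ)..L, (η t x * ηt t x + v t x * vt t x) = -α * ηx t L ^ 2 := by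
    intro t ht
    obtain ⟨hη0, hηL, hηx0⟩ := hbη t ht
    obtain ⟨hv0, hvL⟩ := hbv t ht
    rw [(hηx t ht).integral_energy_rate_of_dirichlet (hvx t ht) (heq1 t ht) (heq2 t ht)
      hη0 hηL hv0 hvL (hrate_cont.uncurry_left t ht).intervalIntegrable, hηx0, hfb t ht]
    ring
  have henergy_deriv : ∀ x ∈ uIcc 0 L, ∀ t ∈ uIcc 0 T,
      HasDerivWithinAt (fun s => (1/2) * (η s x ^ 2 + v s x ^ 2))
        (η t x * ηt t x + v t x * vt t x) (uIcc 0 T) t := fun x hx t ht =>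
    ((((hηt x hx t ht).pow 2).add ((hvt x hx t ht).pow 2)).const_mul (1/2)).congr_deriv (by
      push_cast; ring)
  have henergy_int : ∀ t ∈ uIcc 0 T,
      IntervalIntegrable (fun x => (1/2) * (η t x ^ 2 + v t x ^ 2)) volume 0 L := fun t ht =>
    (continuousOn_const.mul (((hηc.uncurry_left t ht).pow 2).add
      ((hvc.uncurry_left t ht).pow 2))).intervalIntegrable
  have hbalance := integral_integral_eq_integral_sub_integral_of_hasDerivWithinAt
    henergy_deriv hrate_cont (henergy_int 0 left_mem_uIcc) (henergy_int T right_mem_uIcc)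
  rw [intervalIntegral.integral_congr hrate_integral] at hbalance
  simp only [intervalIntegral.integral_const_mul] at hbalance
  linear_combination -hbalance

/-- The energy identity for classical solutions of the linearized KdV–KdV system with the
feedback boundary condition `v_x(t,L) = −α η_x(t,L)`. -/
theorem statement_16 (L T α : ℝ) (hL : 0 < L) (hT : 0 < T)
    (η v : ℝ → ℝ → ℝ)
    (hηt : ∀ x, Differentiable ℝ fun t => η t x)
    (hvt : ∀ x, Differentiable ℝ fun t => v t x)
    (hηx : ∀ t, ContDiff ℝ 3 (η t))
    (hvx : ∀ t, ContDiff ℝ 3 (v t))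
    (hηc : ContinuousOn (fun q : ℝ × ℝ => η q.1 q.2) (Icc 0 T ×ˢ Icc 0 L))
    (hvc : ContinuousOn (fun q : ℝ × ℝ => v q.1 q.2) (Icc 0 T ×ˢ Icc 0 L))
    (hηtc : ContinuousOn (fun q : ℝ × ℝ => pt η q.1 q.2) (Icc 0 T ×ˢ Icc 0 L))
    (hvtc : ContinuousOn (fun q : ℝ × ℝ => pt v q.1 q.2) (Icc 0 T ×ˢ Icc 0 L))
    (hηx1 : ContinuousOn (fun q : ℝ × ℝ => px η q.1 q.2) (Icc 0 T ×ˢ Icc 0 L))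
    (hvx1 : ContinuousOn (fun q : ℝ × ℝ => px v q.1 q.2) (Icc 0 T ×ˢ Icc 0 L))
    (hηx2 : ContinuousOn (fun q : ℝ × ℝ => px (px η) q.1 q.2) (Icc 0 T ×ˢ Icc 0 L))
    (hvx2 : ContinuousOn (fun q : ℝ × ℝ => px (px v) q.1 q.2) (Icc 0 T ×ˢ Icc 0 L))
    (hηx3 : ContinuousOn (fun q : ℝ × ℝ => px (px (px η)) q.1 q.2) (Icc 0 T ×ˢ Icc 0 L))
    (hvx3 : ContinuousOn (fun q : ℝ × ℝ => px (px (px v)) q.1 q.2) (Icc 0 T ×ˢ Icc 0 L))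
    (heq1 : ∀ t ∈ Icc (0 : ℝ) T, ∀ x ∈ Icc (0 : ℝ) L,
      pt η t x + px v t x + px (px (px v)) t x = 0)
    (heq2 : ∀ t ∈ Icc (0 : ℝ) T, ∀ x ∈ Icc (0 : ℝ) L,
      pt v t x + px η t x + px (px (px η)) t x = 0)
    (hbη : ∀ t ∈ Icc (0 : ℝ) T, η t 0 = 0 ∧ η t L = 0 ∧ px η t 0 = 0)
    (hbv : ∀ t ∈ Icc (0 : ℝ) T, v t 0 = 0 ∧ v t L = 0)
    (hfb : ∀ t ∈ Icc (0 : ℝ) T, px v t L = -α * px η t L) :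
    (1/2) * (∫ x in (0:ℝ)..L, ((η T x)^2 + (v T x)^2))
      - (1/2) * (∫ x in (0:ℝ)..L, ((η 0 x)^2 + (v 0 x)^2))
      + α * (∫ t in (0:ℝ)..T, (px η t L)^2) = 0 := by
  simp only [← uIcc_of_le hT.le, ← uIcc_of_le hL.le] at hηc hvc hηtc hvtc heq1 heq2 hbη hbv hfb
  exact statement_16_general (fun x _ t _ => (hηt x t).hasDerivAt.hasDerivWithinAt)
    (fun x _ t _ => (hvt x t).hasDerivAt.hasDerivWithinAt) (fun t _ => .of_contDiff (hηx t) _)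
    (fun t _ => .of_contDiff (hvx t) _) hηc hvc hηtc hvtc heq1 heq2 hbη hbv hfb
end
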